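/- If e₁ and e₂ are parallel edges of a graph G (two edges joining the same pair of vertices), then H^i(G) ≅ H^i(G−e₂) for all i; consequently the graph cohomology is unchanged when multiple edges are replaced by single edges. -/

import Mathlib

/-- A finite multigraph (possibly with loops and multiple edges), with
vertex type `V` and edges indexed by `Fin n`, edge `e` having endpoints `ends e`. -/
structure OGraph where
  V : Type
  [finV : Fintype V]
  n : ℕ
  ends : Fin n → Sym2 V

attribute [instance] OGraph.finV

namespace OGraph

variable (G : OGraph)

/-- Two vertices are related if some edge in `s` joins them. -/
def rel (s : Finset (Fin G.n)) (u v : G.V) : Prop := ∃ e ∈ s, G.ends e = s(u, v)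

/-- The set of connected components of the spanning subgraph `[G:s]`. -/
def Comp (s : Finset (Fin G.n)) : Type := Quot (G.rel s)

/-- `k(s)`: the number of connected components of the spanning subgraph `[G:s]`. -/
noncomputable def ncomp (s : Finset (Fin G.n)) : ℕ := Nat.card (G.Comp s)

/-- The number of proper colorings of `G` with `m` colors: the value `P_G(m)` of
the chromatic polynomial at the natural number `m`. -/
noncomputable def chromatic (m : ℕ) : ℕ :=
  Nat.card {c : G.V → Fin m // ∀ e u v, G.ends e = s(u, v) → c u ≠ c v}

end OGraph

namespace OGraph

noncomputable instance finiteQuot {V : Type} [Finite V] (r : V → V → Prop) :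
    Fintype (Quot r) :=
  letI : Finite (Quot r) :=
    Finite.of_surjective (Quot.mk r) fun q => Quot.inductionOn q fun v => ⟨v, rfl⟩
  Fintype.ofFinite _

/-- The graph `G − e` obtained from `G` by deleting the edge `e`; the ordering of
the remaining edges is inherited from `G`. -/
def delG (V : Type) [Fintype V] {n : ℕ} (ends : Fin (n + 1) → Sym2 V)
    (e : Fin (n + 1)) : OGraph :=
  ⟨V, n, fun k => ends (e.succAbove k)⟩

/-- The graph `G / e` obtained from `G` by contracting the edge `e` (identifying its
two endpoints and removing `e`); the ordering of the remaining edges is inherited. -/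
noncomputable def ctrG (V : Type) [Fintype V] {n : ℕ} (ends : Fin (n + 1) → Sym2 V)
    (e : Fin (n + 1)) : OGraph :=
  ⟨Quot (fun u v : V => ends e = s(u, v)), n,
    fun k => (ends (e.succAbove k)).map (Quot.mk _)⟩

end OGraph

namespace OGraph

/-- The map on quotients induced by an implication of relations. -/
def qmap {V : Type} {r r' : V → V → Prop} (h : ∀ u v, r u v → r' u v) :
    Quot r → Quot r' :=
  Quot.lift (Quot.mk r') fun u v huv => Quot.sound (h u v huv)

variable (G : OGraph)

/-- An enhanced state: a subset `s` of the edges together with an assignment of a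
color (`1` or `x`; a component is "colored `x`" when the predicate holds) to each
connected component of the spanning subgraph `[G:s]`. -/
abbrev EState := Σ s : Finset (Fin G.n), (G.Comp s → Prop)

/-- `j(S)`: the number of components colored `x` in the enhanced state `S`. -/
noncomputable def jdeg (S : G.EState) : ℕ := Nat.card {k : G.Comp S.1 // S.2 k}

open Classical in
/-- The enhanced state(s) obtained from `S` by adding the edge `e`: zero if `e`
already belongs to `S` or if the added edge merges two components both colored `x`
(the product `x∗x = 0`); otherwise the enhanced state on `insert e s` whose
coloring is obtained from that of `S` using the product
`1∗1 = 1`, `1∗x = x∗1 = x`. -/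
noncomputable def addEdge (S : G.EState) (e : Fin G.n) : G.EState →₀ ℤ :=
  if e ∈ S.1 then 0
  else
    let p : G.Comp S.1 → G.Comp (insert e S.1) :=
      qmap fun _ _ huv => huv.elim fun f hf => ⟨f, Finset.mem_insert_of_mem hf.1, hf.2⟩
    if ∃ k1 k2 : G.Comp S.1, k1 ≠ k2 ∧ p k1 = p k2 ∧ S.2 k1 ∧ S.2 k2 then 0
    else Finsupp.single ⟨insert e S.1, fun K => ∃ k, p k = K ∧ S.2 k⟩ 1

/-- The differential applied to a single enhanced state: the signed sum, over all
edges `e` not in `S`, of the states obtained by adding `e`; the sign is `(-1)^{n(e)}`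
where `n(e)` is the number of edges of `S` ordered before `e`. -/
noncomputable def dState (S : G.EState) : G.EState →₀ ℤ :=
  ∑ e : Fin G.n, ((-1 : ℤ) ^ (S.1.filter fun f => f < e).card) • G.addEdge S e

/-- The differential of the graph cohomology complex, as a linear endomorphism of
the free `ℤ`-module generated by all enhanced states. -/
noncomputable def diff : (G.EState →₀ ℤ) →ₗ[ℤ] (G.EState →₀ ℤ) :=
  Finsupp.lsum ℤ fun S => LinearMap.toSpanSingleton ℤ _ (G.dState S)

/-- The chain group `C^{i,j}(G)`: the free `ℤ`-module spanned by the enhanced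
states with `i` edges and `j` components colored `x`, as a submodule of the free
module on all enhanced states. -/
noncomputable def Cmod (i j : ℕ) : Submodule ℤ (G.EState →₀ ℤ) :=
  Finsupp.supported ℤ ℤ {S : G.EState | S.1.card = i ∧ G.jdeg S = j}

/-- The cocycles of bidegree `(i,j)`. -/
noncomputable def Zmod (i j : ℕ) : Submodule ℤ (G.EState →₀ ℤ) :=
  LinearMap.ker G.diff ⊓ G.Cmod i j

/-- The coboundaries: `0` for `i = 0`, the image of `C^{i,j}` for `i + 1`. -/
noncomputable def Bmod : ℕ → ℕ → Submodule ℤ (G.EState →₀ ℤ)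
  | 0, _ => ⊥
  | i + 1, j => Submodule.map G.diff (G.Cmod i j)

/-- The graph cohomology group `H^{i,j}(G)` (cocycles modulo coboundaries in
bidegree `(i,j)`). -/
noncomputable def Hmod (i j : ℕ) : Type :=
  (G.Zmod i j).toAddSubgroup ⧸
    (AddSubgroup.comap (G.Zmod i j).toAddSubgroup.subtype (G.Bmod i j).toAddSubgroup)

noncomputable instance (i j : ℕ) : AddCommGroup (G.Hmod i j) := by
  delta Hmod; infer_instance

end OGraph

namespace OGraph

section helpers

theorem abstract_iso (G G' : OGraph)
    (p : (G.EState →₀ ℤ) →ₗ[ℤ] (G'.EState →₀ ℤ))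
    (q : (G'.EState →₀ ℤ) →ₗ[ℤ] (G.EState →₀ ℤ))
    (h : (G.EState →₀ ℤ) →ₗ[ℤ] (G.EState →₀ ℤ))
    (hpq : ∀ x, p (q x) = x)
    (hp : ∀ x, p (G.diff x) = G'.diff (p x))
    (hdd : ∀ x, G.diff (G.diff x) = 0)
    (hph : ∀ x, p (h x) = 0)
    (hh : ∀ x, p x = 0 → G.diff (h x) + h (G.diff x) = x)
    (hpC : ∀ i j x, x ∈ G.Cmod i j → p x ∈ G'.Cmod i j)
    (hqC : ∀ i j x, x ∈ G'.Cmod i j → q x ∈ G.Cmod i j)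
    (hdC : ∀ i j x, x ∈ G.Cmod i j → G.diff x ∈ G.Cmod (i + 1) j)
    (hhC : ∀ i j x, x ∈ G.Cmod (i + 1) j → h x ∈ G.Cmod i j)
    (hh0 : ∀ j x, x ∈ G.Cmod 0 j → h x = 0) (i j : ℕ) :
    Nonempty (G.Hmod i j ≃+ G'.Hmod i j) := by
  have hpZ : ∀ x ∈ G.Zmod i j, p x ∈ G'.Zmod i j := by
    rintro x ⟨h1, h2⟩
    refine ⟨?_, hpC _ _ _ h2⟩
    have h1' : G.diff x = 0 := h1
    change G'.diff (p x) = 0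
    rw [← hp, h1', map_zero]
  let φ : (G.Zmod i j).toAddSubgroup →+ (G'.Zmod i j).toAddSubgroup :=
    { toFun := fun x => ⟨p x.1, hpZ x.1 x.2⟩
      map_zero' := by ext1; simp
      map_add' := fun x y => by ext1; simp }
  let ψ : (G.Zmod i j).toAddSubgroup →+ G'.Hmod i j :=
    (QuotientAddGroup.mk' (AddSubgroup.comap (G'.Zmod i j).toAddSubgroup.subtype
      (G'.Bmod i j).toAddSubgroup)).comp φ
  have hsurj : Function.Surjective ψ := by
    intro y
    obtain ⟨⟨w, hw1, hw2⟩, rfl⟩ := QuotientAddGroup.mk'_surjective _ y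
    have hw1' : G'.diff w = 0 := hw1
    have hz : q w - h (G.diff (q w)) ∈ G.Zmod i j := by
      refine ⟨?_, Submodule.sub_mem _ (hqC _ _ _ hw2) (hhC _ _ _ (hdC _ _ _ (hqC _ _ _ hw2)))⟩
      change G.diff _ = 0
      have := hh (G.diff (q w)) (by rw [hp, hpq, hw1'])
      rw [hdd, map_zero, add_zero] at this
      rw [map_sub, this, sub_self]
    refine ⟨⟨_, hz⟩, ?_⟩
    change QuotientAddGroup.mk' _ (φ _) = _
    congr 1
    apply Subtype.ext
    change p (q w - h (G.diff (q w))) = w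
    rw [map_sub, hpq, hph, sub_zero]
  have hker : AddSubgroup.comap (G.Zmod i j).toAddSubgroup.subtype (G.Bmod i j).toAddSubgroup
      = ψ.ker := by
    ext ⟨z, hz⟩
    have e1 : (⟨z, hz⟩ : (G.Zmod i j).toAddSubgroup) ∈ ψ.ker ↔ p z ∈ G'.Bmod i j := by
      rw [AddMonoidHom.mem_ker]
      change ((φ ⟨z, hz⟩ : _) : _ ⧸ (AddSubgroup.comap (G'.Zmod i j).toAddSubgroup.subtype
        (G'.Bmod i j).toAddSubgroup)) = 0 ↔ _
      rw [QuotientAddGroup.eq_zero_iff]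
      rfl
    rw [e1]
    change z ∈ G.Bmod i j ↔ _
    obtain ⟨hz1, hz2⟩ := hz
    have hz1' : G.diff z = 0 := hz1
    cases i with
    | zero =>
      change z ∈ (⊥ : Submodule ℤ _) ↔ p z ∈ (⊥ : Submodule ℤ _)
      rw [Submodule.mem_bot, Submodule.mem_bot]
      constructor
      · rintro rfl; simp
      · intro h0
        have := hh z h0
        rw [hz1', hh0 j z hz2] at this
        simpa using this.symm
    | succ i =>
      change z ∈ Submodule.map G.diff (G.Cmod i j) ↔ p z ∈ Submodule.map G'.diff (G'.Cmod i j)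
      constructor
      · rintro ⟨y, hy, rfl⟩
        exact ⟨p y, hpC _ _ _ hy, (hp y).symm⟩
      · rintro ⟨y, hy, hyz⟩
        have h1 : p (z - G.diff (q y)) = 0 := by
          rw [map_sub, hp, hpq, hyz, sub_self]
        have h2 := hh _ h1
        rw [map_sub G.diff, hz1', hdd, sub_zero, map_zero, add_zero] at h2
        refine ⟨q y + h (z - G.diff (q y)), Submodule.add_mem _ (hqC _ _ _ hy)
          (hhC _ _ _ (Submodule.sub_mem _ hz2 (hdC _ _ _ (hqC _ _ _ hy)))), ?_⟩
        rw [map_add, h2]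
        abel
  exact ⟨(QuotientAddGroup.quotientAddEquivOfEq hker).trans
    (QuotientAddGroup.quotientKerEquivOfSurjective ψ hsurj)⟩

variable (G : OGraph)

def cmap {s t : Finset (Fin G.n)} (h : s ⊆ t) : G.Comp s → G.Comp t :=
  qmap fun _ _ huv => huv.elim fun f hf => ⟨f, h hf.1, hf.2⟩

theorem cmap_cmap {s t u : Finset (Fin G.n)} (h : s ⊆ t) (h' : t ⊆ u) (k : G.Comp s) :
    G.cmap h' (G.cmap h k) = G.cmap (h.trans h') k := by
  induction k using Quot.ind
  rfl

theorem cmap_surj {s t : Finset (Fin G.n)} (h : s ⊆ t) : Function.Surjective (G.cmap h) := by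
  intro k
  induction k using Quot.ind with
  | mk v => exact ⟨Quot.mk _ v, rfl⟩

theorem cmap_id {s : Finset (Fin G.n)} (h : s ⊆ s) (k : G.Comp s) : G.cmap h k = k := by
  induction k using Quot.ind
  rfl

theorem cmap_inj {s t : Finset (Fin G.n)} (h : s ⊆ t)
    (hr : ∀ u v, G.rel t u v → G.rel s u v) : Function.Injective (G.cmap h) := by
  have : ∀ k, (qmap hr : G.Comp t → G.Comp s) (G.cmap h k) = k := by
    intro k
    induction k using Quot.ind
    rfl
  exact Function.LeftInverse.injective this

def im (S : G.EState) (t : Finset (Fin G.n)) (h : S.1 ⊆ t) : G.EState :=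
  ⟨t, fun K => ∃ k, G.cmap h k = K ∧ S.2 k⟩

open Classical in
noncomputable def push (S : G.EState) (t : Finset (Fin G.n)) : G.EState →₀ ℤ :=
  if h : S.1 ⊆ t then
    if Set.InjOn (G.cmap h) {k | S.2 k} then Finsupp.single (G.im S t h) 1 else 0
  else 0

theorem push_pos {S : G.EState} {t : Finset (Fin G.n)} (h : S.1 ⊆ t)
    (hi : Set.InjOn (G.cmap h) {k | S.2 k}) :
    G.push S t = Finsupp.single (G.im S t h) 1 := by
  rw [push, dif_pos h, if_pos hi]

theorem push_neg {S : G.EState} {t : Finset (Fin G.n)} (h : S.1 ⊆ t)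
    (hi : ¬ Set.InjOn (G.cmap h) {k | S.2 k}) :
    G.push S t = 0 := by
  rw [push, dif_pos h, if_neg hi]

theorem addEdge_eq (S : G.EState) (e : Fin G.n) :
    G.addEdge S e = if e ∈ S.1 then 0 else G.push S (insert e S.1) := by
  unfold addEdge
  split_ifs with h1
  · rfl
  · have hs : S.1 ⊆ insert e S.1 := Finset.subset_insert _ _
    dsimp only
    by_cases hi : Set.InjOn (G.cmap hs) {k | S.2 k}
    · rw [push_pos G hs hi, if_neg]
      · rfl
      · rintro ⟨k1, k2, hk, hp, h1, h2⟩
        exact hk (hi h1 h2 hp)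
    · rw [push_neg G hs hi, if_pos]
      by_contra hc
      apply hi
      intro k1 h1 k2 h2 hp
      by_contra hk
      exact hc ⟨k1, k2, hk, hp, h1, h2⟩

def sgn {n : ℕ} (s : Finset (Fin n)) (e : Fin n) : ℤ := (-1) ^ (s.filter fun f => f < e).card

theorem sgn_sq {n : ℕ} (s : Finset (Fin n)) (e : Fin n) : sgn s e * sgn s e = 1 := by
  unfold sgn
  rw [← mul_pow]; simp

theorem sgn_insert {n : ℕ} {s : Finset (Fin n)} {e : Fin n} (he : e ∉ s) (f : Fin n) :
    sgn (insert e s) f = sgn s f * if e < f then -1 else 1 := by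
  unfold sgn
  rw [Finset.filter_insert]
  split_ifs with h
  · rw [Finset.card_insert_of_notMem (by simp [he]), pow_succ]
  · simp

theorem sgn_swap {n : ℕ} {s : Finset (Fin n)} {e f : Fin n} (he : e ∉ s) (hf : f ∉ s)
    (hef : e ≠ f) : sgn s e * sgn (insert e s) f = - (sgn s f * sgn (insert f s) e) := by
  rw [sgn_insert he, sgn_insert hf]
  rcases lt_or_gt_of_ne hef with h | h
  · rw [if_pos h, if_neg h.not_gt]; ring
  · rw [if_pos h, if_neg h.not_gt]; ring

theorem diff_single (S : G.EState) : G.diff (Finsupp.single S 1) =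
    ∑ e : Fin G.n, if e ∈ S.1 then 0 else sgn S.1 e • G.push S (insert e S.1) := by
  have : G.diff (Finsupp.single S 1) = G.dState S := by
    simp [diff]
  rw [this, dState]
  refine Finset.sum_congr rfl fun e _ => ?_
  rw [addEdge_eq]
  split_ifs <;> simp [sgn]

theorem injOn_im {S : G.EState} {t u : Finset (Fin G.n)} (h : S.1 ⊆ t) (h' : t ⊆ u)
    (hi : Set.InjOn (G.cmap h) {k | S.2 k}) :
    Set.InjOn (G.cmap h') {k | (G.im S t h).2 k} ↔
      Set.InjOn (G.cmap (h.trans h')) {k | S.2 k} := by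
  constructor
  · intro H k1 h1 k2 h2 e
    rw [← cmap_cmap G h h', ← cmap_cmap G h h'] at e
    exact hi h1 h2 (H ⟨k1, rfl, h1⟩ ⟨k2, rfl, h2⟩ e)
  · rintro H _ ⟨k1, rfl, h1⟩ _ ⟨k2, rfl, h2⟩ e
    rw [cmap_cmap, cmap_cmap] at e
    rw [H h1 h2 e]

theorem im_im {S : G.EState} {t u : Finset (Fin G.n)} (h : S.1 ⊆ t) (h' : t ⊆ u) :
    G.im (G.im S t h) u h' = G.im S u (h.trans h') := by
  unfold im
  congr 1
  funext K
  apply propext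
  constructor
  · rintro ⟨_, rfl, k, rfl, hk⟩
    exact ⟨k, (cmap_cmap G _ _ _).symm, hk⟩
  · rintro ⟨k, rfl, hk⟩
    exact ⟨_, cmap_cmap G h h' k, k, rfl, hk⟩

theorem push_push {S : G.EState} {t u : Finset (Fin G.n)} (h : S.1 ⊆ t) (h' : t ⊆ u)
    (hi : Set.InjOn (G.cmap h) {k | S.2 k}) :
    G.push (G.im S t h) u = G.push S u := by
  by_cases H : Set.InjOn (G.cmap (h.trans h')) {k | S.2 k}
  · rw [push_pos G (h.trans h') H, push_pos G (S := G.im S t h) h' ((injOn_im G h h' hi).2 H),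
      im_im]
  · rw [push_neg G (h.trans h') H,
      push_neg G (S := G.im S t h) h' (fun hc => H ((injOn_im G h h' hi).1 hc))]

theorem push_zero {S : G.EState} {t u : Finset (Fin G.n)} (h : S.1 ⊆ t) (h' : t ⊆ u)
    (hi : ¬ Set.InjOn (G.cmap h) {k | S.2 k}) : G.push S u = 0 := by
  apply push_neg G (h.trans h')
  intro H
  apply hi
  intro k1 h1 k2 h2 e
  apply H h1 h2
  rw [← cmap_cmap G h h', ← cmap_cmap G h h', e]

theorem push_self (S : G.EState) : G.push S S.1 = Finsupp.single S 1 := by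
  rw [push_pos G (Finset.Subset.refl _)]
  · congr 1
    obtain ⟨s, P⟩ := S
    unfold im
    congr 1
    funext K
    simp [cmap_id]
  · intro k1 _ k2 _ e
    simpa [cmap_id] using e

theorem diff_push {S : G.EState} {t : Finset (Fin G.n)} (h : S.1 ⊆ t) :
    G.diff (G.push S t) =
      ∑ e : Fin G.n, if e ∈ t then 0 else sgn t e • G.push S (insert e t) := by
  by_cases hi : Set.InjOn (G.cmap h) {k | S.2 k}
  · rw [push_pos G h hi, diff_single]
    refine Finset.sum_congr rfl fun e _ => ?_
    change (if e ∈ t then _ else sgn t e • G.push _ (insert e t)) = _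
    rw [push_push G h (Finset.subset_insert _ _) hi]
  · rw [push_neg G h hi, map_zero]
    symm
    refine Finset.sum_eq_zero fun e _ => ?_
    rw [push_zero G h (Finset.subset_insert _ _) hi]
    simp

theorem diff_diff_single (S : G.EState) : G.diff (G.diff (Finsupp.single S 1)) = 0 := by
  have key : G.diff (G.diff (Finsupp.single S 1)) = ∑ e : Fin G.n, ∑ f : Fin G.n,
      if e ∈ S.1 ∨ f ∈ S.1 ∨ e = f then 0 else
        (sgn S.1 e * sgn (insert e S.1) f) • G.push S (insert f (insert e S.1)) := by
    rw [diff_single, map_sum]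
    refine Finset.sum_congr rfl fun e _ => ?_
    by_cases he : e ∈ S.1
    · simp [he]
    · rw [if_neg he, map_smul, diff_push G (Finset.subset_insert _ _), Finset.smul_sum]
      refine Finset.sum_congr rfl fun f _ => ?_
      by_cases hf : f ∈ S.1
      · simp [hf]
      · by_cases hef : e = f
        · simp [hef]
        · rw [if_neg (by simp [hf, Ne.symm hef]), if_neg (by simp [he, hf, hef]), smul_smul]
  have hneg : G.diff (G.diff (Finsupp.single S 1)) = - G.diff (G.diff (Finsupp.single S 1)) := by
    conv_rhs => rw [key, Finset.sum_comm]
    rw [key, ← Finset.sum_neg_distrib]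
    refine Finset.sum_congr rfl fun e _ => ?_
    rw [← Finset.sum_neg_distrib]
    refine Finset.sum_congr rfl fun f _ => ?_
    by_cases hc : e ∈ S.1 ∨ f ∈ S.1 ∨ e = f
    · rw [if_pos hc, if_pos (by tauto), neg_zero]
    · rw [if_neg hc, if_neg (by tauto)]
      push Not at hc
      rw [sgn_swap hc.1 hc.2.1 hc.2.2, neg_smul, Finset.insert_comm]
  exact self_eq_neg.1 hneg

theorem diff_diff (x : G.EState →₀ ℤ) : G.diff (G.diff x) = 0 := by
  have : G.diff ∘ₗ G.diff = 0 := by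
    apply Finsupp.lhom_ext'
    intro S
    apply LinearMap.ext_ring
    simpa using diff_diff_single G S
  exact LinearMap.congr_fun this x

theorem jdeg_im {S : G.EState} {t : Finset (Fin G.n)} (h : S.1 ⊆ t)
    (hi : Set.InjOn (G.cmap h) {k | S.2 k}) : G.jdeg (G.im S t h) = G.jdeg S := by
  unfold jdeg
  symm
  refine Nat.card_congr (Equiv.ofBijective
    (fun k => (⟨G.cmap h k.1, k.1, rfl, k.2⟩ : {k // (G.im S t h).2 k})) ⟨?_, ?_⟩)
  · rintro ⟨k1, h1⟩ ⟨k2, h2⟩ e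
    exact Subtype.ext (hi h1 h2 (congrArg Subtype.val e))
  · rintro ⟨_, k, rfl, hk⟩
    exact ⟨⟨k, hk⟩, rfl⟩

theorem push_mem {S : G.EState} {t : Finset (Fin G.n)} (h : S.1 ⊆ t) :
    G.push S t ∈ G.Cmod t.card (G.jdeg S) := by
  by_cases hi : Set.InjOn (G.cmap h) {k | S.2 k}
  · rw [push_pos G h hi]
    exact Finsupp.single_mem_supported ℤ _ ⟨rfl, jdeg_im G h hi⟩
  · rw [push_neg G h hi]
    exact Submodule.zero_mem _

/-- Checking a linear map on generators. -/
theorem supported_le {α β : Type} (A : Set α) (M : Submodule ℤ (β →₀ ℤ))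
    (f : (α →₀ ℤ) →ₗ[ℤ] (β →₀ ℤ)) (H : ∀ a ∈ A, f (Finsupp.single a 1) ∈ M) :
    ∀ x ∈ Finsupp.supported ℤ ℤ A, f x ∈ M := by
  have : Finsupp.supported ℤ ℤ A ≤ M.comap f := by
    rw [Finsupp.supported_eq_span_single, Submodule.span_le]
    rintro _ ⟨a, ha, rfl⟩
    exact H a ha
  exact this

theorem diff_mem (i j : ℕ) (x) (hx : x ∈ G.Cmod i j) : G.diff x ∈ G.Cmod (i + 1) j := by
  refine supported_le _ _ G.diff ?_ x hx
  rintro S ⟨h1, h2⟩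
  rw [diff_single]
  refine Submodule.sum_mem _ fun e _ => ?_
  split_ifs with he
  · exact Submodule.zero_mem _
  · apply Submodule.smul_mem
    have := push_mem G (S := S) (Finset.subset_insert e S.1)
    rwa [Finset.card_insert_of_notMem he, h1, h2] at this

/-- Pull back a coloring. -/
def pull (S : G.EState) (t : Finset (Fin G.n)) (h : t ⊆ S.1) : G.EState :=
  ⟨t, fun k => S.2 (G.cmap h k)⟩

open Classical in
noncomputable def hS (a b : Fin G.n) (S : G.EState) : G.EState →₀ ℤ :=
  if a ∈ S.1 ∧ b ∈ S.1 then
    sgn (S.1.erase a) a • Finsupp.single (G.pull S (S.1.erase a) (Finset.erase_subset _ _)) 1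
  else 0

noncomputable def hL (a b : Fin G.n) : (G.EState →₀ ℤ) →ₗ[ℤ] (G.EState →₀ ℤ) :=
  Finsupp.lsum ℤ fun S => LinearMap.toSpanSingleton ℤ _ (G.hS a b S)

theorem hL_single (a b : Fin G.n) (S : G.EState) :
    G.hL a b (Finsupp.single S 1) = G.hS a b S := by
  simp [hL]

theorem hS_eq (a b : Fin G.n) (S : G.EState) (t : Finset (Fin G.n)) (h : t ⊆ S.1)
    (hat : a ∉ t) (hb : b ∈ S.1) (hS : S.1 = insert a t) :
    G.hS a b S = sgn t a • Finsupp.single (G.pull S t h) 1 := by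
  have ht : t = S.1.erase a := by rw [hS, Finset.erase_insert hat]
  subst ht
  rw [OGraph.hS, if_pos ⟨by rw [hS]; simp, hb⟩]

section par
variable {a b : Fin G.n}

theorem cmap_par_inj (hpar : G.ends a = G.ends b) {t : Finset (Fin G.n)} (hb : b ∈ t) (h : t ⊆ insert a t) :
    Function.Injective (G.cmap h) := by
  apply cmap_inj
  rintro u v ⟨e, he, huv⟩
  rcases Finset.mem_insert.1 he with rfl | he
  · exact ⟨b, hb, by rw [← hpar, huv]⟩
  · exact ⟨e, he, huv⟩

theorem hL_push (hpar : G.ends a = G.ends b) {S : G.EState} {t : Finset (Fin G.n)} (h : S.1 ⊆ t) (hb : b ∈ t) (ha : a ∉ t) :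
    G.hL a b (G.push S (insert a t)) = sgn t a • G.push S t := by
  have hs : t ⊆ insert a t := Finset.subset_insert _ _
  have hinj := cmap_par_inj G hpar hb hs
  by_cases hi : Set.InjOn (G.cmap h) {k | S.2 k}
  · rw [← push_push G h hs hi, push_pos G h hi, push_pos G (S := G.im S t h) hs hinj.injOn,
      hL_single, hS_eq G a b _ t hs ha (Finset.mem_insert_of_mem hb) rfl]
    congr 2
    unfold pull
    unfold im
    congr 1
    funext k
    apply propext
    constructor
    · rintro ⟨k', h1, h2⟩
      rwa [hinj h1] at h2
    · intro hk
      exact ⟨k, rfl, hk⟩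
  · rw [push_zero G h hs hi, push_neg G h hi]
    simp

theorem hL_push_zero {S : G.EState} {t : Finset (Fin G.n)} (h : S.1 ⊆ t) (ha : a ∉ t) :
    G.hL a b (G.push S t) = 0 := by
  by_cases hi : Set.InjOn (G.cmap h) {k | S.2 k}
  · rw [push_pos G h hi, hL_single, hS, if_neg]
    exact fun hc => ha hc.1
  · rw [push_neg G h hi, map_zero]

theorem exists_pull (hpar : G.ends a = G.ends b) (hne : a ≠ b) (S : G.EState) (ha : a ∈ S.1) (hb : b ∈ S.1) :
    ∃ R : G.EState, a ∉ R.1 ∧ b ∈ R.1 ∧ Finsupp.single S (1 : ℤ) = G.push R (insert a R.1) := by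
  obtain ⟨s, P⟩ := S
  obtain ⟨t, hat, rfl⟩ : ∃ t, a ∉ t ∧ insert a t = s :=
    ⟨s.erase a, Finset.notMem_erase _ _, Finset.insert_erase ha⟩
  have hs : t ⊆ insert a t := Finset.subset_insert _ _
  have hbt : b ∈ t := by
    rcases Finset.mem_insert.1 hb with h | h
    · exact absurd h.symm hne
    · exact h
  refine ⟨⟨t, fun k => P (G.cmap hs k)⟩, hat, hbt, ?_⟩
  have hinj := cmap_par_inj G hpar hbt hs
  rw [push_pos G (S := ⟨t, fun k => P (G.cmap hs k)⟩) hs hinj.injOn]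
  congr 1
  unfold im
  congr 1
  funext K
  apply propext
  constructor
  · intro hK
    obtain ⟨k, rfl⟩ := cmap_surj G hs K
    exact ⟨k, rfl, hK⟩
  · rintro ⟨k, rfl, hk⟩
    exact hk

theorem homotopy_single (hpar : G.ends a = G.ends b) (hne : a ≠ b) (S : G.EState) (hb : b ∈ S.1) :
    G.diff (G.hL a b (Finsupp.single S 1)) + G.hL a b (G.diff (Finsupp.single S 1))
      = Finsupp.single S 1 := by
  by_cases ha : a ∈ S.1
  · obtain ⟨R, haR, hbR, hR⟩ := exists_pull G hpar hne S ha hb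
    rw [hR, hL_push G hpar (Finset.Subset.refl _) hbR haR, diff_push G (Finset.subset_insert _ _),
      map_smul, diff_push G (Finset.Subset.refl _), map_sum, Finset.smul_sum,
      ← Finset.sum_add_distrib, Finset.sum_eq_single a]
    · simp [haR, smul_smul, sgn_sq]
    · intro f _ hfa
      by_cases hf : f ∈ R.1
      · simp [hf]
      · have haf : a ∉ insert f R.1 := by simp [haR, Ne.symm hfa]
        rw [if_neg hf, if_neg (by simp [hf, hfa]), Finset.insert_comm, map_smul,
          hL_push G hpar (Finset.subset_insert _ _) (Finset.mem_insert_of_mem hbR) haf,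
          smul_smul, smul_smul, ← add_smul]
        have h1 := sgn_swap haR hf (Ne.symm hfa)
        have h2 := sgn_sq R.1 a
        have h3 := sgn_sq R.1 f
        have : sgn R.1 a * sgn R.1 f + sgn (insert a R.1) f * sgn (insert f R.1) a = 0 := by
          have e1 : sgn (insert a R.1) f = sgn R.1 a * (sgn R.1 a * sgn (insert a R.1) f) := by
            rw [← mul_assoc, h2, one_mul]
          rw [e1, h1]
          have h4 := sgn_sq (insert f R.1) a
          linear_combination (-(sgn R.1 a * sgn R.1 f)) * h4
        rw [this, zero_smul]
    · simp
  · rw [hL_single, hS, if_neg (fun hc => ha hc.1), map_zero, zero_add, diff_single, map_sum,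
      Finset.sum_eq_single a]
    · rw [if_neg ha, map_smul, hL_push G hpar (Finset.Subset.refl _) hb ha, smul_smul, sgn_sq,
        one_smul, push_self]
    · intro f _ hfa
      split_ifs with hf
      · simp
      · rw [map_smul, hL_push_zero G (Finset.subset_insert _ _) (by simp [ha, Ne.symm hfa]),
          smul_zero]
    · simp

theorem hL_mem (hpar : G.ends a = G.ends b) (hne : a ≠ b) (i j : ℕ) (x) (hx : x ∈ G.Cmod (i + 1) j) :
    G.hL a b x ∈ G.Cmod i j := by
  refine supported_le _ _ (G.hL a b) ?_ x hx
  rintro S ⟨h1, h2⟩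
  by_cases hab : a ∈ S.1 ∧ b ∈ S.1
  · obtain ⟨R, haR, hbR, hR⟩ := exists_pull G hpar hne S hab.1 hab.2
    have hs : R.1 ⊆ insert a R.1 := Finset.subset_insert _ _
    have hi := (cmap_par_inj G hpar hbR hs).injOn (s := {k | R.2 k})
    rw [push_pos G hs hi] at hR
    have hSR := Finsupp.single_left_injective (one_ne_zero) hR
    have hRC : R ∈ {S : G.EState | S.1.card = i ∧ G.jdeg S = j} := by
      subst hSR
      refine ⟨?_, by rw [← h2, jdeg_im G hs hi]⟩
      change (insert a R.1).card = i + 1 at h1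
      rw [Finset.card_insert_of_notMem haR] at h1
      omega
    rw [hR, ← push_pos G hs hi, hL_push G hpar (Finset.Subset.refl _) hbR haR, push_self]
    exact Submodule.smul_mem _ _ (Finsupp.single_mem_supported ℤ _ hRC)
  · rw [hL_single, hS, if_neg hab]
    exact Submodule.zero_mem _

theorem hL_zero (j : ℕ) (x) (hx : x ∈ G.Cmod 0 j) : G.hL a b x = 0 := by
  rw [← Submodule.mem_bot ℤ]
  refine supported_le _ _ (G.hL a b) ?_ x hx
  rintro S ⟨h1, h2⟩
  rw [hL_single, hS, if_neg]
  · exact Submodule.zero_mem _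
  · rw [Finset.card_eq_zero.1 h1]
    simp

end par

end helpers

end OGraph

namespace OGraph

section deletion

variable (V : Type) [Fintype V] {n : ℕ} (ends : Fin (n + 1) → Sym2 V) (b : Fin (n + 1))

abbrev bigG : OGraph := OGraph.mk V (n + 1) ends

def up (s : Finset (Fin n)) : Finset (Fin (n + 1)) := s.map b.succAboveEmb

theorem notMem_up (s : Finset (Fin n)) : b ∉ up b s := by
  simp [up, Fin.succAbove_ne]

theorem up_inj {s t : Finset (Fin n)} (h : up b s = up b t) : s = t :=
  Finset.map_injective _ h

theorem mem_up {s : Finset (Fin n)} {k : Fin n} : b.succAbove k ∈ up b s ↔ k ∈ s := by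
  simp [up]

theorem up_insert (s : Finset (Fin n)) (k : Fin n) :
    up b (insert k s) = insert (b.succAbove k) (up b s) := by
  simp [up, Finset.map_insert]

theorem exists_up {s : Finset (Fin (n + 1))} (h : b ∉ s) : ∃ t, up b t = s := by
  refine ⟨Finset.univ.filter fun k => b.succAbove k ∈ s, ?_⟩
  ext e
  rcases Fin.eq_self_or_eq_succAbove b e with rfl | ⟨k, rfl⟩
  · simp [h, notMem_up]
  · rw [mem_up]; simp

theorem sgn_up (s : Finset (Fin n)) (k : Fin n) :
    sgn (up b s) (b.succAbove k) = sgn s k := by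
  unfold sgn up
  rw [Finset.filter_map, Finset.card_map]
  congr 2
  ext f
  rw [Finset.mem_filter, Finset.mem_filter]
  exact and_congr_right fun _ => Fin.succAbove_lt_succAbove_iff

theorem rel_up (s : Finset (Fin n)) (u v : V) :
    (bigG V ends).rel (up b s) u v ↔ (delG V ends b).rel s u v := by
  constructor
  · rintro ⟨e, he, h⟩
    obtain ⟨k, hk, rfl⟩ := Finset.mem_map.1 he
    exact ⟨k, hk, h⟩
  · rintro ⟨k, hk, h⟩
    exact ⟨b.succAbove k, (mem_up b).2 hk, h⟩

def cup (s : Finset (Fin n)) : (bigG V ends).Comp (up b s) ≃ (delG V ends b).Comp s where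
  toFun := qmap fun u v h => (rel_up V ends b s u v).1 h
  invFun := qmap fun u v h => (rel_up V ends b s u v).2 h
  left_inv k := by induction k using Quot.ind; rfl
  right_inv k := by induction k using Quot.ind; rfl

def io (T : (delG V ends b).EState) : (bigG V ends).EState :=
  ⟨up b T.1, fun k => T.2 (cup V ends b T.1 k)⟩

theorem io_inj : Function.Injective (io V ends b) := by
  rintro ⟨s, P⟩ ⟨t, Q⟩ h
  have h1 : s = t := up_inj b (congrArg Sigma.fst h)
  subst h1
  congr 1
  have h2 := eq_of_heq (Sigma.mk.inj h).2
  funext k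
  have := congrFun h2 ((cup V ends b s).symm k)
  simpa using this

theorem exists_io (S : (bigG V ends).EState) (h : b ∉ S.1) : ∃ T, io V ends b T = S := by
  obtain ⟨s, P⟩ := S
  obtain ⟨t, rfl⟩ := exists_up b h
  refine ⟨⟨t, fun k => P ((cup V ends b t).symm k)⟩, ?_⟩
  unfold io
  congr 1
  funext k
  simp

theorem jdeg_io (T : (delG V ends b).EState) :
    (bigG V ends).jdeg (io V ends b T) = (delG V ends b).jdeg T := by
  unfold jdeg
  exact Nat.card_congr ((cup V ends b T.1).subtypeEquiv fun k => Iff.rfl)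

noncomputable def qL : ((delG V ends b).EState →₀ ℤ) →ₗ[ℤ] ((bigG V ends).EState →₀ ℤ) :=
  Finsupp.lmapDomain ℤ ℤ (io V ends b)

noncomputable def pL : ((bigG V ends).EState →₀ ℤ) →ₗ[ℤ] ((delG V ends b).EState →₀ ℤ) :=
  Finsupp.lcomapDomain (io V ends b) (io_inj V ends b)

theorem pL_apply (x) (T) : pL V ends b x T = x (io V ends b T) := rfl

theorem qL_single (T) (c : ℤ) :
    qL V ends b (Finsupp.single T c) = Finsupp.single (io V ends b T) c := by
  simp [qL]

theorem pL_qL (x) : pL V ends b (qL V ends b x) = x := by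
  ext T
  rw [pL_apply]
  exact Finsupp.mapDomain_apply (io_inj V ends b) x T

theorem pL_single_zero (S : (bigG V ends).EState) (h : b ∈ S.1) (c : ℤ) :
    pL V ends b (Finsupp.single S c) = 0 := by
  ext T
  rw [pL_apply]
  refine Finsupp.single_eq_of_ne' ?_
  rintro rfl
  exact notMem_up b _ h

theorem pL_push_zero {S : (bigG V ends).EState} {t : Finset (Fin (n + 1))} (hs : S.1 ⊆ t)
    (h : b ∈ t) : pL V ends b ((bigG V ends).push S t) = 0 := by
  by_cases hi : Set.InjOn ((bigG V ends).cmap hs) {k | S.2 k}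
  · rw [push_pos _ hs hi, pL_single_zero _ _ _ _ h]
  · rw [push_neg _ hs hi, map_zero]

theorem cup_cmap {s t : Finset (Fin n)} (h : s ⊆ t) (h' : up b s ⊆ up b t)
    (k : (bigG V ends).Comp (up b s)) :
    cup V ends b t ((bigG V ends).cmap h' k) = (delG V ends b).cmap h (cup V ends b s k) := by
  induction k using Quot.ind
  rfl

theorem push_up (T : (delG V ends b).EState) (t : Finset (Fin n)) (h : T.1 ⊆ t) :
    (bigG V ends).push (io V ends b T) (up b t) = qL V ends b ((delG V ends b).push T t) := by
  have h' : (io V ends b T).1 ⊆ up b t := Finset.map_subset_map.2 h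
  have hiff : Set.InjOn ((bigG V ends).cmap h') {k | (io V ends b T).2 k} ↔
      Set.InjOn ((delG V ends b).cmap h) {k | T.2 k} := by
    constructor
    · intro H k1 h1 k2 h2 e
      obtain ⟨k1, rfl⟩ := (cup V ends b T.1).surjective k1
      obtain ⟨k2, rfl⟩ := (cup V ends b T.1).surjective k2
      rw [← cup_cmap V ends b h h', ← cup_cmap V ends b h h'] at e
      exact congrArg _ (H h1 h2 ((cup V ends b t).injective e))
    · intro H k1 h1 k2 h2 e
      apply (cup V ends b T.1).injective
      apply H h1 h2
      exact (cup_cmap V ends b h h' k1).symm.trans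
        ((congrArg _ e).trans (cup_cmap V ends b h h' k2))
  by_cases hi : Set.InjOn ((delG V ends b).cmap h) {k | T.2 k}
  · rw [push_pos _ h hi, push_pos _ h' (hiff.2 hi), qL_single]
    congr 1
    refine congrArg (Sigma.mk (β := fun s => (bigG V ends).Comp s → Prop) (up b t)) ?_
    funext K
    apply propext
    constructor
    · rintro ⟨k, rfl, hk⟩
      exact ⟨cup V ends b T.1 k, (cup_cmap V ends b h h' k).symm, hk⟩
    · rintro ⟨k, hk, hk2⟩
      obtain ⟨k, rfl⟩ := (cup V ends b T.1).surjective k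
      rw [← cup_cmap V ends b h h'] at hk
      exact ⟨k, (cup V ends b t).injective hk, hk2⟩
  · rw [push_neg _ h hi, push_neg _ h' (fun hc => hi (hiff.1 hc)), map_zero]

theorem pL_diff (x) :
    pL V ends b ((bigG V ends).diff x) = (delG V ends b).diff (pL V ends b x) := by
  have : pL V ends b ∘ₗ (bigG V ends).diff = (delG V ends b).diff ∘ₗ pL V ends b := by
    apply Finsupp.lhom_ext'
    intro S
    apply LinearMap.ext_ring
    change pL V ends b ((bigG V ends).diff (Finsupp.single S 1)) =
      (delG V ends b).diff (pL V ends b (Finsupp.single S 1))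
    by_cases hb : b ∈ S.1
    · rw [pL_single_zero V ends b S hb, map_zero, diff_single, map_sum]
      refine Finset.sum_eq_zero fun e _ => ?_
      split_ifs
      · simp
      · rw [map_smul, pL_push_zero V ends b (Finset.subset_insert _ _)
          (Finset.mem_insert_of_mem hb), smul_zero]
    · obtain ⟨T, rfl⟩ := exists_io V ends b S hb
      rw [← qL_single, pL_qL, qL_single, diff_single, diff_single, map_sum]
      refine (Fin.sum_univ_succAbove _ b).trans ?_
      rw [if_neg hb, map_smul, pL_push_zero V ends b (Finset.subset_insert _ _)
          (Finset.mem_insert_self _ _), smul_zero, zero_add]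
      refine Finset.sum_congr rfl fun k _ => ?_
      by_cases hk : k ∈ T.1
      · exact ((congrArg _ (if_pos ((mem_up b).2 hk))).trans (map_zero _)).trans
          (if_pos hk).symm
      · refine (congrArg _ (if_neg (fun hc => hk ((mem_up b).1 hc)))).trans
          (Eq.trans ?_ (if_neg hk).symm)
        have e1 : (bigG V ends).push (io V ends b T) (insert (b.succAbove k) (io V ends b T).1)
          = qL V ends b ((delG V ends b).push T (insert k T.1)) := by
          refine Eq.trans ?_ (push_up V ends b T _ (Finset.subset_insert _ _))
          congr 1
          exact (up_insert b T.1 k).symm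
        have e2 : sgn (io V ends b T).1 (b.succAbove k) = sgn T.1 k := sgn_up b T.1 k
        refine (map_smul _ _ _).trans ?_
        exact congrArg₂ (fun (c : ℤ) y => c • y) e2
          ((congrArg (pL V ends b) e1).trans (pL_qL V ends b _))
  exact LinearMap.congr_fun this x

theorem pL_eq_zero (x) (hx : pL V ends b x = 0) :
    x ∈ Finsupp.supported ℤ ℤ {S : (bigG V ends).EState | b ∈ S.1} := by
  rw [Finsupp.mem_supported']
  intro S hS
  obtain ⟨T, rfl⟩ := exists_io V ends b S hS
  rw [← pL_apply, hx]
  rfl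

theorem qL_mem (i j : ℕ) (x) (hx : x ∈ (delG V ends b).Cmod i j) :
    qL V ends b x ∈ (bigG V ends).Cmod i j := by
  refine supported_le _ _ (qL V ends b) ?_ x hx
  rintro T ⟨h1, h2⟩
  rw [qL_single]
  exact Finsupp.single_mem_supported ℤ _ ⟨by rw [← h1]; exact Finset.card_map _,
    by rw [← h2]; exact jdeg_io V ends b T⟩

theorem pL_mem (i j : ℕ) (x) (hx : x ∈ (bigG V ends).Cmod i j) :
    pL V ends b x ∈ (delG V ends b).Cmod i j := by
  refine supported_le _ _ (pL V ends b) ?_ x hx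
  rintro S ⟨h1, h2⟩
  by_cases hb : b ∈ S.1
  · rw [pL_single_zero V ends b S hb]
    exact Submodule.zero_mem _
  · obtain ⟨T, rfl⟩ := exists_io V ends b S hb
    rw [← qL_single, pL_qL]
    exact Finsupp.single_mem_supported ℤ _ ⟨by rw [← h1]; exact (Finset.card_map _).symm,
      by rw [← h2]; exact (jdeg_io V ends b T).symm⟩

theorem pL_hL (a : Fin (n + 1)) (hne : a ≠ b) (x) :
    pL V ends b ((bigG V ends).hL a b x) = 0 := by
  have : pL V ends b ∘ₗ (bigG V ends).hL a b = 0 := by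
    apply Finsupp.lhom_ext'
    intro S
    apply LinearMap.ext_ring
    change pL V ends b ((bigG V ends).hL a b (Finsupp.single S 1)) = 0
    rw [hL_single, hS]
    split_ifs with h
    · rw [map_smul, pL_single_zero V ends b _ (Finset.mem_erase.2 ⟨hne.symm, h.2⟩), smul_zero]
    · simp
  exact LinearMap.congr_fun this x

theorem homotopy (a : Fin (n + 1)) (hne : a ≠ b) (hpar : ends a = ends b) (x)
    (hx : pL V ends b x = 0) :
    (bigG V ends).diff ((bigG V ends).hL a b x) + (bigG V ends).hL a b ((bigG V ends).diff x)
      = x := by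
  have := supported_le _ ⊥ ((bigG V ends).diff ∘ₗ (bigG V ends).hL a b +
    (bigG V ends).hL a b ∘ₗ (bigG V ends).diff - LinearMap.id) ?_ x (pL_eq_zero V ends b x hx)
  · rw [Submodule.mem_bot] at this
    exact sub_eq_zero.1 this
  · intro S hS
    rw [Submodule.mem_bot]
    exact sub_eq_zero.2 (homotopy_single (bigG V ends) hpar hne S hS)

end deletion

end OGraph

/-- if `e₁` and `e₂` are parallel edges of `G` (distinct edges
joining the same pair of vertices), then `H^{i,j}(G) ≅ H^{i,j}(G − e₂)` for all
`i, j`; consequently the graph cohomology is unchanged when multiple edges are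
replaced by single edges. -/
theorem cohomology_parallel_edge (V : Type) [Fintype V] {n : ℕ}
    (ends : Fin (n + 1) → Sym2 V) (e₁ e₂ : Fin (n + 1)) (hne : e₁ ≠ e₂)
    (hpar : ends e₁ = ends e₂) :
    ∀ i j : ℕ, Nonempty
      ((OGraph.mk V (n + 1) ends).Hmod i j ≃+ (OGraph.delG V ends e₂).Hmod i j) := by
  exact OGraph.abstract_iso _ _ (OGraph.pL V ends e₂) (OGraph.qL V ends e₂)
    ((OGraph.bigG V ends).hL e₁ e₂) (OGraph.pL_qL V ends e₂) (OGraph.pL_diff V ends e₂)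
    (OGraph.diff_diff _) (OGraph.pL_hL V ends e₂ e₁ hne)
    (OGraph.homotopy V ends e₂ e₁ hne hpar) (OGraph.pL_mem V ends e₂) (OGraph.qL_mem V ends e₂)
    (OGraph.diff_mem _) (OGraph.hL_mem (OGraph.bigG V ends) hpar hne)
    (OGraph.hL_zero (OGraph.bigG V ends))
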